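/- arXiv:0807.0095 — 2 statements merged into one kernel-verified Lean document; each statement's English description precedes it below -/
import Mathlib

section
/- If the deficiency indices of S are finite, then T = S*, the auxiliary space G is finite dimensional, G₀ = G, and any generalized Q-function of {S, A, T} is an ordinary Q-function of the pair {S, A}. -/
open scoped InnerProductSpace ComplexConjugate

noncomputable section

variable {H G : Type*}
  [NormedAddCommGroup H] [InnerProductSpace ℂ H] [CompleteSpace H]
  [NormedAddCommGroup G] [InnerProductSpace ℂ G] [CompleteSpace G]

/-- `R` is the (bounded, everywhere defined) resolvent of `A` at `lam`. -/
def IsResolventAt (A : H →ₗ.[ℂ] H) (lam : ℂ) (R : H →L[ℂ] H) : Prop :=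
  (∀ x : H, ∃ hx : R x ∈ A.domain, A ⟨R x, hx⟩ - lam • R x = x) ∧
  (∀ x : A.domain, R (A x - lam • (x : H)) = x)

/-- `lam` belongs to the resolvent set of `A`. -/
def InResolventSet (A : H →ₗ.[ℂ] H) (lam : ℂ) : Prop :=
  ∃ R : H →L[ℂ] H, IsResolventAt A lam R

/-- The defect set `ker (T - lam)` of a partially defined operator `T`. -/
def kerAt (T : H →ₗ.[ℂ] H) (lam : ℂ) : Set H :=
  {f | ∃ hf : f ∈ T.domain, T ⟨f, hf⟩ = lam • f}

/-- A set is finite dimensional: it is contained in the span of finitely many vectors. -/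
def SpannedByFinitelyMany (M : Set H) : Prop :=
  ∃ (n : ℕ) (b : Fin n → H), M ⊆ (Submodule.span ℂ (Set.range b) : Set H)

namespace LinearPMap

theorem inner_apply_eq_of_isSelfAdjoint {A : H →ₗ.[ℂ] H} (hA : IsSelfAdjoint A)
    (x y : A.domain) : ⟪A x, (y : H)⟫_ℂ = ⟪(x : H), A y⟫_ℂ := by
  have h := adjoint_isFormalAdjoint hA.dense_domain
  rw [isSelfAdjoint_def.mp hA] at h
  exact h x y

/-- Pythagoras for a selfadjoint operator shifted by a purely imaginary number. -/
theorem norm_sub_smul_sq_of_isSelfAdjoint {A : H →ₗ.[ℂ] H} (hA : IsSelfAdjoint A)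
    {c : ℂ} (hc : c.re = 0) (x : A.domain) :
    ‖A x - c • (x : H)‖ ^ 2 = ‖A x‖ ^ 2 + ‖c • (x : H)‖ ^ 2 := by
  have him : (⟪A x, (x : H)⟫_ℂ).im = 0 := by
    rw [← Complex.conj_eq_iff_im, inner_conj_symm]
    exact (inner_apply_eq_of_isSelfAdjoint hA x x).symm
  have hre : RCLike.re ⟪A x, c • (x : H)⟫_ℂ = 0 := by
    simp [him, hc]
  rw [norm_sub_sq (𝕜 := ℂ), hre]
  ring

/-- A selfadjoint operator shifted by the imaginary unit is surjective. -/
theorem exists_sub_I_smul_eq_of_isSelfAdjoint {A : H →ₗ.[ℂ] H} (hA : IsSelfAdjoint A) (z : H) :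
    ∃ x : A.domain, A x - Complex.I • (x : H) = z := by
  have : CompleteSpace A.graph := hA.isClosed.completeSpace_coe
  let L : A.graph →L[ℂ] H :=
    (ContinuousLinearMap.snd ℂ H H - Complex.I • ContinuousLinearMap.fst ℂ H H).comp
      A.graph.subtypeL
  have hL (x : A.domain) : L ⟨_, A.mem_graph x⟩ = A x - Complex.I • (x : H) := rfl
  have hanti : AntilipschitzWith 1 L := by
    refine L.antilipschitz_of_bound fun p => ?_
    obtain ⟨⟨a, b⟩, hp⟩ := p
    obtain ⟨x, rfl, rfl⟩ := (A.mem_graph_iff).mp hp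
    have h := norm_sub_smul_sq_of_isSelfAdjoint hA Complex.I_re x
    rw [norm_smul, Complex.norm_I, one_mul] at h
    rw [hL, NNReal.coe_one, one_mul, Submodule.coe_norm, Prod.norm_mk]
    refine max_le ?_ ?_ <;> refine (sq_le_sq₀ (norm_nonneg _) (norm_nonneg _)).mp ?_ <;>
      nlinarith [sq_nonneg ‖A x‖, sq_nonneg ‖(x : H)‖]
  have hclosed : _root_.IsClosed (L.range : Set H) := hanti.isClosed_range L.uniformContinuous
  have : CompleteSpace L.range := hclosed.completeSpace_coe
  have htop : L.range = ⊤ := by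
    rw [← Submodule.orthogonal_eq_bot_iff, Submodule.eq_bot_iff]
    intro v hv
    have hin (x : A.domain) : ⟪-Complex.I • v, (x : H)⟫_ℂ = ⟪v, A x⟫_ℂ := by
      have h0 : ⟪v, A x - Complex.I • (x : H)⟫_ℂ = 0 :=
        (Submodule.mem_orthogonal' _ _).mp hv _ ⟨⟨_, A.mem_graph x⟩, hL x⟩
      rw [inner_sub_right, inner_smul_right, sub_eq_zero] at h0
      simp [inner_smul_left, h0]
    have hmem := A.mem_adjoint_domain_of_exists v ⟨_, hin⟩
    have happ := adjoint_apply_eq hA.dense_domain ⟨v, hmem⟩ hin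
    have hgr : (v, -Complex.I • v) ∈ A.graph := by
      rw [← isSelfAdjoint_def.mp hA]
      exact (mem_graph_iff _).mpr ⟨⟨v, hmem⟩, rfl, happ⟩
    obtain ⟨x, hx, hAx⟩ := (mem_graph_iff _).mp hgr
    have h := norm_sub_smul_sq_of_isSelfAdjoint hA (c := -Complex.I) (by simp) x
    simp only at hx hAx
    rw [hAx, hx, sub_self, norm_zero, norm_smul, norm_neg, Complex.norm_I] at h
    have : ‖v‖ = 0 := by nlinarith [sq_nonneg ‖v‖]
    exact norm_eq_zero.mp this
  obtain ⟨⟨⟨a, b⟩, hp⟩, hz⟩ : z ∈ L.range := htop ▸ Submodule.mem_top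
  obtain ⟨x, rfl, rfl⟩ := (A.mem_graph_iff).mp hp
  exact ⟨x, hz⟩

/-- If `B` extends a selfadjoint operator `A`, the graph of `B` is the graph of `A` enlarged by
the eigenvectors of `B` at the imaginary unit. -/
theorem graph_le_graph_sup_of_isSelfAdjoint {A B : H →ₗ.[ℂ] H} (hA : IsSelfAdjoint A)
    (hAB : A ≤ B) {V : Submodule ℂ H} (hV : kerAt B Complex.I ⊆ V) :
    B.graph ≤ A.graph ⊔ V.map (LinearMap.prod LinearMap.id (Complex.I • LinearMap.id)) := by
  rintro ⟨a, b⟩ hp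
  obtain ⟨f, rfl, rfl⟩ := B.mem_graph_iff.mp hp
  obtain ⟨x, hx⟩ := exists_sub_I_smul_eq_of_isSelfAdjoint hA (B f - Complex.I • (f : H))
  have hgr : ((f : H) - x, B f - A x) ∈ B.graph :=
    B.graph.sub_mem hp (le_graph_of_le hAB (A.mem_graph x))
  have heq : B f - A x = Complex.I • ((f : H) - x) := by
    rw [smul_sub, sub_eq_sub_iff_sub_eq_sub]
    exact hx.symm
  obtain ⟨g, hg, hBg⟩ := B.mem_graph_iff.mp hgr
  simp only at hg hBg
  refine Submodule.mem_sup.mpr ⟨_, A.mem_graph x, ((f : H) - x, B f - A x), ?_, by simp⟩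
  refine ⟨(f : H) - x, hV ⟨hg ▸ g.2, ?_⟩, by simp [heq]⟩
  rw [← heq, ← hBg]
  exact congrArg B (Subtype.ext hg.symm)

end LinearPMap

/-- Let `S` be a densely defined closed symmetric operator with finite deficiency
indices `n±(S) = dim ker(S* ∓ i) < ∞`, let `A` be a selfadjoint extension of `S` and let `T`
satisfy `A ⊆ T ⊆ S*` with `T̄ = S*`, and let `Γ_{λ₀} : G₀ ⊆ G → H` be a densely defined bounded
injective operator with range `ker(T - λ₀)` (so that `dim G = dim ker(T - λ₀)`).  Then `T = S*`,
the space `G` is finite dimensional and `G₀ = G`; in particular any generalized `Q`-function of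
`{S, A, T}` (whose values are defined on `G₀`) is an ordinary `Q`-function of the pair
`{S, A}`. -/
theorem statement4
    (S A T : H →ₗ.[ℂ] H)
    (hSdense : Dense (S.domain : Set H)) (hSclosed : S.IsClosed)
    (hSsym : ∀ f g : S.domain, ⟪S f, (g : H)⟫_ℂ = ⟪(f : H), S g⟫_ℂ)
    (hA : IsSelfAdjoint A) (hSA : S ≤ A) (hAT : A ≤ T) (hTS : T ≤ S.adjoint)
    (hTcl : T.closure = S.adjoint)
    (hdefplus : SpannedByFinitelyMany (kerAt S.adjoint Complex.I))
    (hdefminus : SpannedByFinitelyMany (kerAt S.adjoint (-Complex.I)))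
    (G₀ : Submodule ℂ G) (hG₀ : Dense (G₀ : Set G))
    (Γ₀ : G₀ →ₗ[ℂ] H) (C : ℝ) (hΓ₀bdd : ∀ g : G₀, ‖Γ₀ g‖ ≤ C * ‖(g : G)‖)
    (hΓ₀inj : Function.Injective Γ₀)
    (lam₀ : ℂ) (hlam₀ : InResolventSet A lam₀)
    (hΓ₀ran : Set.range Γ₀ = kerAt T lam₀) :
    T = S.adjoint ∧ FiniteDimensional ℂ G ∧ G₀ = (⊤ : Submodule ℂ G) := by
  obtain ⟨n, b, hb⟩ := hdefplus
  have hgraph := LinearPMap.graph_le_graph_sup_of_isSelfAdjoint hA (hAT.trans hTS) hb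
  set F := (Submodule.span ℂ (Set.range b)).map
    (LinearMap.prod LinearMap.id (Complex.I • LinearMap.id) : H →ₗ[ℂ] H × H)
  have : FiniteDimensional ℂ (Submodule.span ℂ (Set.range b)) :=
    FiniteDimensional.span_of_finite ℂ (Set.finite_range b)
  have hTF : T.graph ≤ A.graph ⊔ F := (LinearPMap.le_graph_of_le hTS).trans hgraph
  have hTclosed : IsClosed (T.graph : Set (H × H)) := by
    have h : T.graph = A.graph ⊔ (F ⊓ T.graph : Submodule ℂ (H × H)) := by
      rw [← sup_inf_assoc_of_le F (LinearPMap.le_graph_of_le hAT), inf_eq_right.mpr hTF]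
    have : FiniteDimensional ℂ (F ⊓ T.graph : Submodule ℂ (H × H)) :=
      Submodule.finiteDimensional_inf_left _ _
    rw [h]
    exact Submodule.isClosed_sup_finiteDimensional _ _ hA.isClosed
  have hG₀fin : FiniteDimensional ℂ G₀ := by
    let L : G₀ →ₗ[ℂ] (H × H) ⧸ A.graph := A.graph.mkQ ∘ₗ Γ₀.prod (lam₀ • Γ₀)
    have hrange (g : G₀) : L g ∈ F.map A.graph.mkQ := by
      obtain ⟨hf, hTf⟩ : Γ₀ g ∈ kerAt T lam₀ := hΓ₀ran ▸ Set.mem_range_self g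
      have hgr : (Γ₀ g, lam₀ • Γ₀ g) ∈ T.graph := T.mem_graph_iff.mpr ⟨⟨_, hf⟩, rfl, hTf⟩
      obtain ⟨p, hp, q, hq, hpq⟩ := Submodule.mem_sup.mp (hTF hgr)
      refine ⟨q, hq, ?_⟩
      change A.graph.mkQ q = A.graph.mkQ (Γ₀ g, lam₀ • Γ₀ g)
      rw [← hpq, map_add, right_eq_add]
      exact (Submodule.Quotient.mk_eq_zero _).mpr hp
    refine FiniteDimensional.of_injective (L.codRestrict _ hrange)
      ((LinearMap.injective_codRestrict_iff ..).mpr ?_)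
    rw [← LinearMap.ker_eq_bot, Submodule.eq_bot_iff]
    intro g hg
    have hgr : (Γ₀ g, lam₀ • Γ₀ g) ∈ A.graph := (Submodule.Quotient.mk_eq_zero _).mp hg
    obtain ⟨x, hx, hAx⟩ := A.mem_graph_iff.mp hgr
    obtain ⟨R, -, hR⟩ := hlam₀
    have h := hR x
    simp only at hx hAx
    rw [hAx, hx, sub_self, map_zero] at h
    exact hΓ₀inj (h.symm.trans (map_zero Γ₀).symm)
  have hG₀top : G₀ = ⊤ := by
    rw [← G₀.closed_of_finiteDimensional.submodule_topologicalClosure_eq]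
    exact Submodule.dense_iff_topologicalClosure_eq_top.mp hG₀
  refine ⟨?_, ?_, hG₀top⟩
  · have hcl : T.IsClosable := LinearPMap.IsClosed.isClosable hTclosed
    rw [← hTcl]
    refine LinearPMap.eq_of_eq_graph ?_
    rw [← hcl.graph_closure_eq_closure_graph]
    exact hTclosed.submodule_topologicalClosure_eq.symm
  · subst hG₀top
    exact Submodule.topEquiv.finiteDimensional
end
end

section
/- If n = 2, then for all λ ∈ ρ(A_D) ∩ ρ(A_N) the trace formula tr((A_D − λ)⁻¹ − (A_N − λ)⁻¹) = tr( closure(Q(λ)⁻¹) · (d/dλ)Q̃(λ) ) holds, where Q̃ is the Nevanlinna function equal to the closure of Q(λ) − Re Q(λ₀). -/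
open scoped InnerProductSpace ComplexConjugate

noncomputable section

variable {H B : Type*}
  [NormedAddCommGroup H] [InnerProductSpace ℂ H] [CompleteSpace H]
  [NormedAddCommGroup B] [InnerProductSpace ℂ B] [CompleteSpace B]

section Nuclear

open ContinuousLinearMap Filter Topology

variable {E F G : Type*} [NormedAddCommGroup E] [InnerProductSpace ℂ E]
  [NormedAddCommGroup F] [InnerProductSpace ℂ F]
  [NormedAddCommGroup G] [InnerProductSpace ℂ G]

/-- `C x = ∑ ⟪u i, x⟫ • v i` with `∑ ‖u i‖ * ‖v i‖ < ∞`. -/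
structure IsNuclearRep {ι : Type} (C : E →L[ℂ] F) (u : ι → E) (v : ι → F) : Prop where
  summable : Summable fun i => ‖u i‖ * ‖v i‖
  hasSum : ∀ x, HasSum (fun i => ⟪u i, x⟫_ℂ • v i) (C x)

/-- The operator `C` has a nuclear representation. -/
def IsNuclear (C : E →L[ℂ] F) : Prop :=
  ∃ (ι : Type) (u : ι → E) (v : ι → F), IsNuclearRep C u v

namespace IsNuclearRep

variable {ι : Type} {u : ι → E} {v : ι → F}

theorem comp_left {C : E →L[ℂ] F} (h : IsNuclearRep C u v) (L : F →L[ℂ] G) :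
    IsNuclearRep (L ∘L C) u (fun i => L (v i)) where
  summable := by
    refine Summable.of_nonneg_of_le (fun i => by positivity) (fun i => ?_)
      (h.summable.mul_left ‖L‖)
    calc ‖u i‖ * ‖L (v i)‖ ≤ ‖u i‖ * (‖L‖ * ‖v i‖) := by gcongr; exact L.le_opNorm _
      _ = ‖L‖ * (‖u i‖ * ‖v i‖) := by ring
  hasSum x := by simpa using L.hasSum (h.hasSum x)

theorem comp_right {C : E →L[ℂ] F} (h : IsNuclearRep C u v) [CompleteSpace E] [CompleteSpace G]
    (L : G →L[ℂ] E) :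
    IsNuclearRep (C ∘L L) (fun i => adjoint L (u i)) v where
  summable := by
    refine Summable.of_nonneg_of_le (fun i => by positivity) (fun i => ?_)
      (h.summable.mul_left ‖adjoint L‖)
    rw [← mul_assoc]
    gcongr
    exact ContinuousLinearMap.le_opNorm _ _
  hasSum x := by
    simpa [ContinuousLinearMap.adjoint_inner_left] using h.hasSum (L x)

end IsNuclearRep

/-- Bessel's inequality combined with the Cauchy-Schwarz inequality. -/
theorem HilbertBasis.tsum_norm_inner_mul_inner_le {κ : Type} (e : HilbertBasis κ ℂ E) (x y : E) :
    ∑' j, ‖⟪x, e j⟫_ℂ * ⟪e j, y⟫_ℂ‖ ≤ ‖x‖ * ‖y‖ := by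
  refine (e.summable_inner_mul_inner x y).norm.tsum_le_of_sum_le fun s => ?_
  calc ∑ j ∈ s, ‖⟪x, e j⟫_ℂ * ⟪e j, y⟫_ℂ‖
      = ∑ j ∈ s, ‖⟪e j, x⟫_ℂ‖ * ‖⟪e j, y⟫_ℂ‖ := by
        simp only [norm_mul, norm_inner_symm x]
    _ ≤ √(∑ j ∈ s, ‖⟪e j, x⟫_ℂ‖ ^ 2) * √(∑ j ∈ s, ‖⟪e j, y⟫_ℂ‖ ^ 2) :=
        Real.sum_mul_le_sqrt_mul_sqrt s _ _
    _ ≤ ‖x‖ * ‖y‖ := by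
        gcongr <;>
        exact Real.sqrt_le_iff.2 ⟨norm_nonneg _, e.orthonormal.sum_inner_products_le _⟩

theorem IsNuclearRep.hasSum_trace {ι κ : Type} {C : E →L[ℂ] E} {u v : ι → E}
    (h : IsNuclearRep C u v) (e : HilbertBasis κ ℂ E) :
    HasSum (fun j => ⟪e j, C (e j)⟫_ℂ) (∑' i, ⟪u i, v i⟫_ℂ) := by
  have hsum : Summable fun p : ι × κ => ⟪u p.1, e p.2⟫_ℂ * ⟪e p.2, v p.1⟫_ℂ := by
    refine Summable.of_norm ?_
    rw [summable_prod_of_nonneg fun _ => norm_nonneg _]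
    exact ⟨fun i => (e.summable_inner_mul_inner (u i) (v i)).norm,
      Summable.of_nonneg_of_le (fun i => tsum_nonneg fun j => norm_nonneg _)
        (fun i => e.tsum_norm_inner_mul_inner_le (u i) (v i)) h.summable⟩
  have htotal : HasSum (fun p : ι × κ => ⟪u p.1, e p.2⟫_ℂ * ⟪e p.2, v p.1⟫_ℂ)
      (∑' i, ⟪u i, v i⟫_ℂ) := by
    convert hsum.hasSum using 1
    rw [hsum.tsum_prod]
    exact tsum_congr fun i => (e.tsum_inner_mul_inner _ _).symm
  refine ((Equiv.prodComm κ ι).hasSum_iff.2 htotal).prod_fiberwise fun j => ?_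
  simpa [inner_smul_right] using (innerSL ℂ (e j)).hasSum (h.hasSum (e j))

/-- The trace of a nuclear operator is continuous along strongly convergent left factors. -/
theorem IsNuclearRep.tendsto_tsum_inner {ι : Type} {C : E →L[ℂ] E} {u v : ι → E}
    (h : IsNuclearRep C u v) {L : ℕ → E →L[ℂ] E} {M : E →L[ℂ] E} {c : ℝ}
    (hbound : ∀ n x, ‖L n x‖ ≤ c * ‖x‖) (hlim : ∀ x, Tendsto (fun n => L n x) atTop (𝓝 (M x))) :
    Tendsto (fun n => ∑' i, ⟪u i, L n (v i)⟫_ℂ) atTop (𝓝 (∑' i, ⟪u i, M (v i)⟫_ℂ)) := by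
  refine tendsto_tsum_of_dominated_convergence (h.summable.mul_left c)
    (fun i => tendsto_const_nhds.inner (hlim (v i))) (Eventually.of_forall fun n i => ?_)
  calc ‖⟪u i, L n (v i)⟫_ℂ‖ ≤ ‖u i‖ * ‖L n (v i)‖ := norm_inner_le_norm _ _
    _ ≤ ‖u i‖ * (c * ‖v i‖) := by gcongr; exact hbound n _
    _ = c * (‖u i‖ * ‖v i‖) := by ring

namespace IsNuclear

theorem add {C D : E →L[ℂ] F} (hC : IsNuclear C) (hD : IsNuclear D) : IsNuclear (C + D) := by
  obtain ⟨ι, u, v, h⟩ := hC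
  obtain ⟨κ, p, q, k⟩ := hD
  refine ⟨ι ⊕ κ, Sum.elim u p, Sum.elim v q, ?_, fun x => ?_⟩
  · exact (HasSum.sum (f := fun i : ι ⊕ κ => ‖Sum.elim u p i‖ * ‖Sum.elim v q i‖)
      h.summable.hasSum k.summable.hasSum).summable
  · exact HasSum.sum (f := fun i : ι ⊕ κ => ⟪Sum.elim u p i, x⟫_ℂ • Sum.elim v q i)
      (h.hasSum x) (k.hasSum x)

theorem const_smul {C : E →L[ℂ] F} (hC : IsNuclear C) (c : ℂ) : IsNuclear (c • C) := by
  obtain ⟨ι, u, v, h⟩ := hC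
  exact ⟨ι, u, fun i => c • v i, by simpa using h.comp_left (c • ContinuousLinearMap.id ℂ F)⟩

theorem sub {C D : E →L[ℂ] F} (hC : IsNuclear C) (hD : IsNuclear D) : IsNuclear (C - D) := by
  simpa [sub_eq_add_neg] using hC.add (hD.const_smul (-1))

end IsNuclear

/-- If one Hilbert basis has a small index type, then so does every other one. -/
theorem HilbertBasis.small_index {ι : Type} {κ : Type*} (e : HilbertBasis ι ℂ E)
    (w : HilbertBasis κ ℂ E) : Small.{0} κ := by
  have hne : ∀ j, ∃ i, ⟪e i, w j⟫_ℂ ≠ 0 := by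
    intro j
    by_contra! h0
    have := e.hasSum_repr (w j)
    simp only [e.repr_apply_apply, h0, zero_smul] at this
    have h1 := w.orthonormal.1 j
    rw [this.unique hasSum_zero, norm_zero] at h1
    exact zero_ne_one h1
  have hcount : ∀ i, {j | ⟪e i, w j⟫_ℂ ≠ 0}.Countable := fun i => by
    refine ((w.summable_inner_mul_inner (e i) (e i)).countable_support).mono fun j hj => ?_
    simpa [inner_eq_zero_symm (x := w j)] using hj
  choose i hi using hne
  choose g hg using fun k => (Set.countable_iff_exists_injOn.1 (hcount k))
  refine small_of_injective (f := fun j => (i j, g (i j) j)) fun a b hab => ?_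
  obtain ⟨h1, h2⟩ := Prod.mk.inj hab
  rw [← h1] at h2
  exact hg (i a) (hi a) (by simpa [h1] using hi b) h2

variable [CompleteSpace E]

/-- A positive operator whose diagonal along one Hilbert basis is summable is nuclear. -/
theorem isNuclear_of_nonneg {κ : Type} {P : E →L[ℂ] E} (hP : 0 ≤ P) (b : HilbertBasis κ ℂ E)
    (hb : Summable fun j => ⟪P (b j), b j⟫_ℂ) : IsNuclear P := by
  have hsa : IsSelfAdjoint (CFC.sqrt P) := (CFC.sqrt_nonneg P).isSelfAdjoint
  have hsq : ∀ x, CFC.sqrt P (CFC.sqrt P x) = P x := fun x =>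
    congrArg (fun L : E →L[ℂ] E => L x) (CFC.sqrt_mul_sqrt_self P hP)
  have hsymm : ∀ x y, ⟪CFC.sqrt P x, y⟫_ℂ = ⟪x, CFC.sqrt P y⟫_ℂ := hsa.isSymmetric
  refine ⟨κ, fun j => CFC.sqrt P (b j), fun j => CFC.sqrt P (b j), ?_, fun x => ?_⟩
  · refine (Complex.reCLM.summable hb).congr fun j => ?_
    rw [← hsq, hsymm, inner_self_eq_norm_sq_to_K, ← sq]
    simp [← Complex.ofReal_pow]
  · simpa [hsq, hsymm, HilbertBasis.repr_apply_apply] using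
      (CFC.sqrt P).hasSum (b.hasSum_repr (CFC.sqrt P x))

/-- A Hilbert basis adapted to the decomposition of the space along a closed subspace. -/
theorem HilbertBasis.exists_adapted {ι : Type} (e : HilbertBasis ι ℂ E) (V : Submodule ℂ E)
    [CompleteSpace V] :
    ∃ (κ : Type) (b : HilbertBasis κ ℂ E), ∀ j, b j ∈ V ∨ b j ∈ Vᗮ := by
  obtain ⟨s, c, hc⟩ := exists_hilbertBasis ℂ V
  have hortho : Orthonormal ℂ (fun x : s => ((x : V) : E)) := by
    have := c.orthonormal.comp_linearIsometry V.subtypeₗᵢ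
    rwa [hc] at this
  obtain ⟨w, b, hsw, hb⟩ := hortho.toSubtypeRange.exists_hilbertBasis_extension
  have hmem : ∀ j, b j ∈ V ∨ b j ∈ Vᗮ := by
    intro j
    by_cases hj : (j : E) ∈ Set.range (fun x : s => ((x : V) : E))
    · obtain ⟨x, hx⟩ := hj
      left
      rw [hb, ← hx]
      exact (x : V).2
    · right
      rw [Submodule.mem_orthogonal]
      intro y hy
      have hsum := ((innerSL ℂ (b j)).comp V.subtypeL).hasSum (c.hasSum_repr ⟨y, hy⟩)
      have hzero : ∀ x : s, ⟪b j, ((c x : V) : E)⟫_ℂ = 0 := by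
        intro x
        have hxw : ((x : V) : E) ∈ w := hsw ⟨x, rfl⟩
        have hne : j ≠ ⟨_, hxw⟩ := fun h => hj ⟨x, by rw [h]⟩
        have := b.orthonormal.2 hne
        simpa [hb, hc] using this
      have : ⟪b j, y⟫_ℂ = 0 := by
        have h0 : HasSum (fun _ : s => (0 : ℂ)) ⟪b j, y⟫_ℂ := by
          simpa [Function.comp_def, inner_smul_right, hzero] using hsum
        exact h0.unique hasSum_zero
      exact inner_eq_zero_symm.1 this
  have := e.small_index b
  let σ := equivShrink.{0} w
  refine ⟨Shrink.{0} w, HilbertBasis.mk (b.orthonormal.comp σ.symm σ.symm.injective) ?_, ?_⟩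
  · rw [σ.symm.surjective.range_comp, b.dense_span]
  · simpa using fun j => hmem (σ.symm j)

/-- A self-adjoint operator whose diagonal is summable along every Hilbert basis has nuclear
positive part. -/
theorem isNuclear_posPart {ι : Type} (e : HilbertBasis ι ℂ E) {C : E →L[ℂ] E}
    (hC : IsSelfAdjoint C)
    (h : ∀ (κ : Type) (b : HilbertBasis κ ℂ E), Summable fun j => ⟪C (b j), b j⟫_ℂ) :
    IsNuclear C⁺ := by
  have hsub : ∀ x, C x = C⁺ x - C⁻ x := fun x =>
    congrArg (fun L : E →L[ℂ] E => L x) (CFC.posPart_sub_negPart C hC).symm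
  have hpn : ∀ x, C⁻ (C⁺ x) = 0 := fun x =>
    congrArg (fun L : E →L[ℂ] E => L x) (CFC.negPart_mul_posPart C)
  have hpsymm : ∀ x y, ⟪C⁺ x, y⟫_ℂ = ⟪x, C⁺ y⟫_ℂ :=
    (CFC.posPart_nonneg C).isSelfAdjoint.isSymmetric
  have : CompleteSpace (LinearMap.ker C⁻.toLinearMap) := C⁻.isClosed_ker.completeSpace_coe
  obtain ⟨κ, b, hb⟩ := e.exists_adapted (LinearMap.ker C⁻.toLinearMap)
  refine isNuclear_of_nonneg (CFC.posPart_nonneg C) b ?_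
  refine Summable.of_norm (((h κ b).norm).of_nonneg_of_le (fun _ => norm_nonneg _) fun j => ?_)
  rcases hb j with hj | hj
  · have h0 : C⁻ (b j) = 0 := hj
    rw [hsub, h0, sub_zero]
  · have h0 : ⟪C⁺ (b j), b j⟫_ℂ = 0 := (Submodule.mem_orthogonal _ _).1 hj _ (hpn _)
    rw [h0, norm_zero]
    exact norm_nonneg _

/-- A self-adjoint operator whose diagonal is summable along every Hilbert basis is nuclear. -/
theorem IsSelfAdjoint.isNuclear {ι : Type} (e : HilbertBasis ι ℂ E) {C : E →L[ℂ] E}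
    (hC : IsSelfAdjoint C)
    (h : ∀ (κ : Type) (b : HilbertBasis κ ℂ E), Summable fun j => ⟪C (b j), b j⟫_ℂ) :
    IsNuclear C := by
  rw [← CFC.posPart_sub_negPart C hC]
  refine (isNuclear_posPart e hC h).sub ?_
  rw [← CFC.posPart_neg]
  exact isNuclear_posPart e hC.neg fun κ b => by simpa using (h κ b).neg

/-- An operator whose diagonal is summable along every Hilbert basis is nuclear. -/
theorem isNuclear_of_summable_diagonal {ι : Type} (e : HilbertBasis ι ℂ E) (C : E →L[ℂ] E)
    (h : ∀ (κ : Type) (b : HilbertBasis κ ℂ E), Summable fun j => ⟪C (b j), b j⟫_ℂ) :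
    IsNuclear C := by
  have hstar : ∀ (κ : Type) (b : HilbertBasis κ ℂ E),
      Summable fun j => ⟪star C (b j), b j⟫_ℂ := fun κ b => by
    refine (Complex.conjCLE.summable.2 (h κ b)).congr fun j => ?_
    simp [ContinuousLinearMap.star_eq_adjoint, ContinuousLinearMap.adjoint_inner_left]
  rw [← realPart_add_I_smul_imaginaryPart C]
  refine IsNuclear.add ?_ (IsNuclear.const_smul ?_ _)
  · refine (realPart C).2.isNuclear e fun κ b => ?_
    rw [realPart_apply_coe]
    refine (((h κ b).add (hstar κ b)).mul_left (2⁻¹ : ℂ)).congr fun j => ?_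
    simp [← Complex.coe_smul, mul_comm, mul_add]
  · refine (imaginaryPart C).2.isNuclear e fun κ b => ?_
    rw [imaginaryPart_apply_coe]
    refine (((h κ b).sub (hstar κ b)).mul_left (Complex.I * 2⁻¹)).congr fun j => ?_
    simp [inner_smul_left, inner_sub_left, ← Complex.coe_smul, Complex.conj_ofNat]
    ring

variable [CompleteSpace F]

/-- The bounded inverse of `A† A + ε`. -/
theorem exists_regularized_inverse (A : E →L[ℂ] F) {ε : ℝ} (hε : 0 < ε) :
    ∃ J : E →L[ℂ] E, (∀ x, adjoint A (A (J x)) + (ε : ℂ) • J x = x) ∧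
      (∀ x, J (adjoint A (A x) + (ε : ℂ) • x) = x) ∧ ∀ x, ε * ‖J x‖ ≤ ‖x‖ := by
  set M : E →L[ℂ] E := adjoint A ∘L A + (ε : ℂ) • ContinuousLinearMap.id ℂ E with hM
  have hle : ∀ x, ε * ‖x‖ ^ 2 ≤ ‖⟪M x, x⟫_ℂ‖ := by
    intro x
    have : ⟪M x, x⟫_ℂ = ((‖A x‖ ^ 2 + ε * ‖x‖ ^ 2 : ℝ) : ℂ) := by
      simp [hM, adjoint_inner_left, inner_self_eq_norm_sq_to_K]
    rw [this, Complex.norm_real, Real.norm_of_nonneg (by positivity)]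
    nlinarith [sq_nonneg ‖A x‖]
  obtain ⟨U, hU⟩ := isUnit_of_forall_le_norm_inner_map M (c := ⟨ε, hε.le⟩) hε
    (fun x => (mul_comm _ _).trans_le (hle x))
  have hright : ∀ x, M ((↑U⁻¹ : E →L[ℂ] E) x) = x := fun x => by
    rw [← hU]
    exact congrArg (fun L : E →L[ℂ] E => L x) U.mul_inv
  have hleft : ∀ x, (↑U⁻¹ : E →L[ℂ] E) (M x) = x := fun x => by
    rw [← hU]
    exact congrArg (fun L : E →L[ℂ] E => L x) U.inv_mul
  refine ⟨↑U⁻¹, hright, hleft, fun x => ?_⟩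
  set y := (↑U⁻¹ : E →L[ℂ] E) x
  have h1 : ε * ‖y‖ ^ 2 ≤ ‖x‖ * ‖y‖ := by
    have := (hle y).trans (norm_inner_le_norm _ _)
    rwa [hright] at this
  rcases (norm_nonneg y).eq_or_lt with h0 | h0
  · simp [← h0]
  · refine le_of_mul_le_mul_right ?_ h0
    calc ε * ‖y‖ * ‖y‖ = ε * ‖y‖ ^ 2 := by ring
      _ ≤ _ := h1

/-- As `ε → 0`, `ε (A† A + ε)⁻¹` converges strongly to the projection onto the kernel of `A`. -/
theorem tendsto_regularized_inverse (A : E →L[ℂ] F) {ε : ℕ → ℝ} (hpos : ∀ n, 0 < ε n)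
    (hε : Tendsto ε atTop (𝓝 0)) {J : ℕ → E →L[ℂ] E}
    (hleft : ∀ n x, J n (adjoint A (A x) + (ε n : ℂ) • x) = x)
    (hbound : ∀ n x, ε n * ‖J n x‖ ≤ ‖x‖) [CompleteSpace (LinearMap.ker A.toLinearMap)] (x : E) :
    Tendsto (fun n => (ε n : ℂ) • J n x) atTop
      (𝓝 ((LinearMap.ker A.toLinearMap).starProjection x)) := by
  set K := LinearMap.ker A.toLinearMap
  have hker : ∀ n, (ε n : ℂ) • J n (K.starProjection x) = K.starProjection x := by
    intro n
    have h0 : A (K.starProjection x) = 0 := K.starProjection_apply_mem x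
    simpa [h0] using hleft n (K.starProjection x)
  have horth : ∀ y ∈ Kᗮ, Tendsto (fun n => (ε n : ℂ) • J n y) atTop (𝓝 0) := by
    intro y hy
    have hrange : y ∈ closure (Set.range (adjoint A ∘L A)) := by
      have h1 : K = LinearMap.ker (adjoint A ∘L A).toLinearMap := (ker_adjoint_comp_self A).symm
      rw [h1, orthogonal_ker, adjoint_comp, adjoint_adjoint] at hy
      exact hy
    rw [Metric.tendsto_atTop]
    intro δ hδ
    obtain ⟨_, ⟨z, rfl⟩, hz⟩ := Metric.mem_closure_iff.1 hrange (δ / 2) (by positivity)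
    have hsmall : Tendsto (fun n => ε n * (2 * ‖z‖)) atTop (𝓝 0) := by
      simpa using hε.mul_const (2 * ‖z‖)
    obtain ⟨N, hN⟩ := Metric.tendsto_atTop.1 hsmall (δ / 2) (by positivity)
    refine ⟨N, fun n hn => ?_⟩
    have hz' : J n (adjoint A (A z)) = z - (ε n : ℂ) • J n z := by
      rw [eq_sub_iff_add_eq, ← map_smul, ← map_add, hleft]
    have hnorm : ∀ w, ‖(ε n : ℂ) • J n w‖ ≤ ‖w‖ := fun w => by
      simpa [norm_smul, abs_of_pos (hpos n)] using hbound n w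
    have h2 : ‖(ε n : ℂ) • J n (adjoint A (A z))‖ ≤ ε n * (2 * ‖z‖) := by
      rw [hz', norm_smul, Complex.norm_real, Real.norm_of_nonneg (hpos n).le]
      gcongr
      · exact (hpos n).le
      · linarith [norm_sub_le z ((ε n : ℂ) • J n z), hnorm z]
    have h3 := hN n hn
    rw [Real.dist_0_eq_abs] at h3
    rw [dist_zero_right]
    calc ‖(ε n : ℂ) • J n y‖
        = ‖(ε n : ℂ) • J n (y - adjoint A (A z)) + (ε n : ℂ) • J n (adjoint A (A z))‖ := by
          rw [← smul_add, ← map_add, sub_add_cancel]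
      _ ≤ ‖y - adjoint A (A z)‖ + ε n * (2 * ‖z‖) :=
          (norm_add_le _ _).trans (add_le_add (hnorm _) h2)
      _ < δ / 2 + δ / 2 := by
          rw [dist_eq_norm] at hz
          exact add_lt_add hz ((le_abs_self _).trans_lt h3)
      _ = δ := add_halves δ
  have hsum := (horth _ (K.sub_starProjection_mem_orthogonal x)).add_const (K.starProjection x)
  rw [zero_add] at hsum
  refine hsum.congr fun n => ?_
  conv_lhs => rw [← hker n]
  rw [← smul_add, ← map_add, hker, sub_add_cancel]

/-- Dominated convergence for the traces of the regularizations of a nuclear operator. -/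
theorem IsNuclearRep.tendsto_tsum_regularized {ι : Type} {C : E →L[ℂ] E} {u v : ι → E}
    (h : IsNuclearRep C u v) (A : E →L[ℂ] F) {ε : ℕ → ℝ} (hpos : ∀ n, 0 < ε n)
    (hε : Tendsto ε atTop (𝓝 0)) {J : ℕ → E →L[ℂ] E}
    (hleft : ∀ n x, J n (adjoint A (A x) + (ε n : ℂ) • x) = x)
    (hbound : ∀ n x, ε n * ‖J n x‖ ≤ ‖x‖) [CompleteSpace (LinearMap.ker A.toLinearMap)] :
    Tendsto (fun n => ∑' i, ⟪u i, v i - (ε n : ℂ) • J n (v i)⟫_ℂ) atTop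
      (𝓝 (∑' i, ⟪u i, v i - (LinearMap.ker A.toLinearMap).starProjection (v i)⟫_ℂ)) := by
  refine h.tendsto_tsum_inner (L := fun n => .id ℂ E - (ε n : ℂ) • J n)
    (M := .id ℂ E - (LinearMap.ker A.toLinearMap).starProjection) (c := 2)
    (fun n x => ?_) fun x => ?_
  · have hnorm : ‖(ε n : ℂ) • J n x‖ ≤ ‖x‖ := by
      simpa [norm_smul, abs_of_pos (hpos n)] using hbound n x
    have := norm_sub_le x ((ε n : ℂ) • J n x)
    simp only [sub_apply, id_apply, smul_apply]
    linarith
  · exact tendsto_const_nhds.sub (tendsto_regularized_inverse A hpos hε hleft hbound x)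

/-- If both products of two bounded operators are nuclear, then their traces agree. -/
theorem tsum_inner_comp_comm {ι κ : Type} (A : F →L[ℂ] E) (C : E →L[ℂ] F)
    (hAC : IsNuclear (A ∘L C)) (hCA : IsNuclear (C ∘L A))
    (e : HilbertBasis ι ℂ E) (f : HilbertBasis κ ℂ F) :
    ∑' i, ⟪e i, A (C (e i))⟫_ℂ = ∑' j, ⟪f j, C (A (f j))⟫_ℂ := by
  obtain ⟨α, u, v, huv⟩ := hAC
  obtain ⟨β, p, q, hpq⟩ := hCA
  let ε : ℕ → ℝ := fun n => 1 / ((n : ℝ) + 1)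
  have hpos : ∀ n, 0 < ε n := fun n => Nat.one_div_pos_of_nat
  have hε : Tendsto ε atTop (𝓝 0) := tendsto_one_div_add_atTop_nhds_zero_nat
  choose J hJr hJl hJb using fun n => exists_regularized_inverse (adjoint A) (hpos n)
  choose J' hJr' hJl' hJb' using fun n => exists_regularized_inverse A (hpos n)
  simp only [adjoint_adjoint] at hJr hJl
  have : CompleteSpace (LinearMap.ker A.toLinearMap) := A.isClosed_ker.completeSpace_coe
  have : CompleteSpace (LinearMap.ker (adjoint A).toLinearMap) :=
    (adjoint A).isClosed_ker.completeSpace_coe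
  set P := (LinearMap.ker (adjoint A).toLinearMap).starProjection with hP
  set P' := (LinearMap.ker A.toLinearMap).starProjection
  have hcomm : ∀ n y, J' n (adjoint A y) = adjoint A (J n y) := by
    intro n y
    conv_lhs => rw [← hJr n y]
    rw [map_add, map_smul, hJl']
  have hAZ : ∀ n y, A (adjoint A (J n y)) = y - (ε n : ℂ) • J n y := fun n y =>
    eq_sub_of_add_eq (hJr n y)
  have hZA : ∀ n y, adjoint A (J n (A y)) = y - (ε n : ℂ) • J' n y := by
    intro n y
    rw [← hcomm, eq_sub_iff_add_eq, ← map_smul, ← map_add, hJl']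
  have htrace : ∀ n, ∑' i, ⟪u i, v i - (ε n : ℂ) • J n (v i)⟫_ℂ =
      ∑' i, ⟪p i, q i - (ε n : ℂ) • J' n (q i)⟫_ℂ := by
    intro n
    have h1 := ((huv.comp_left (adjoint A ∘L J n)).comp_right A).hasSum_trace f
    have h2 := (hpq.comp_left (adjoint A ∘L J n ∘L A)).hasSum_trace f
    have h3 := h1.unique h2
    simpa only [adjoint_inner_left, comp_apply, hAZ, hZA] using h3
  have hlim := huv.tendsto_tsum_regularized (adjoint A) hpos hε
    (by simpa only [adjoint_adjoint] using hJl) hJb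
  have hlim' := hpq.tendsto_tsum_regularized A hpos hε hJl' hJb'
  have hPA : (.id ℂ E - P) ∘L (A ∘L C) = A ∘L C := by
    ext x
    have : P (A (C x)) = 0 := by
      rw [hP, Submodule.starProjection_apply_eq_zero_iff, Submodule.mem_orthogonal]
      intro y hy
      have hy0 : adjoint A y = 0 := hy
      rw [← adjoint_inner_left, hy0, inner_zero_left]
    simp [this]
  have hAP : (C ∘L A) ∘L (.id ℂ F - P') = C ∘L A := by
    ext x
    have : A (P' x) = 0 := (LinearMap.ker A.toLinearMap).starProjection_apply_mem x
    simp [this]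
  have hl := (huv.comp_left (.id ℂ E - P)).hasSum_trace e
  have hr := (hpq.comp_right (.id ℂ F - P')).hasSum_trace f
  rw [hPA] at hl
  rw [hAP] at hr
  have hadj : ∑' i, ⟪adjoint (.id ℂ F - P') (p i), q i⟫_ℂ = ∑' i, ⟪p i, q i - P' (q i)⟫_ℂ := by
    simp [adjoint_inner_left]
  have key := tendsto_nhds_unique (hlim.congr htrace) hlim'
  rw [hadj, ← key] at hr
  exact hl.tsum_eq.trans hr.tsum_eq.symm

end Nuclear

section Resolvent

open ContinuousLinearMap Filter Topology

variable {E F : Type*} [NormedAddCommGroup E] [InnerProductSpace ℂ E]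
  [NormedAddCommGroup F] [InnerProductSpace ℂ F]

/-- The adjoint of the resolvent of a self-adjoint operator at `lam` is a right inverse of the
operator shifted by the conjugate of `lam`. -/
theorem IsSelfAdjoint.exists_adjoint_resolvent_mem [CompleteSpace E]
    {A : E →ₗ.[ℂ] E} (hA : IsSelfAdjoint A)
    {lam : ℂ} {R : E →L[ℂ] E} (hR : IsResolventAt A lam R) (x : E) :
    ∃ hx : adjoint R x ∈ A.domain,
      A ⟨adjoint R x, hx⟩ - conj lam • adjoint R x = x := by
  have hinner : ∀ y : A.domain,
      ⟪x + conj lam • adjoint R x, (y : E)⟫_ℂ = ⟪adjoint R x, A y⟫_ℂ := by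
    intro y
    have h1 : ⟪adjoint R x, A y - lam • (y : E)⟫_ℂ = ⟪x, (y : E)⟫_ℂ := by
      rw [adjoint_inner_left, hR.2 y]
    rw [inner_sub_right, inner_smul_right, sub_eq_iff_eq_add] at h1
    rw [inner_add_left, inner_smul_left, Complex.conj_conj, h1]
  have hgraph : (adjoint R x, x + conj lam • adjoint R x) ∈ A.graph := by
    have hmem := A.mem_adjoint_domain_of_exists (adjoint R x) ⟨_, hinner⟩
    rw [← LinearPMap.isSelfAdjoint_def.1 hA, LinearPMap.mem_graph_iff]
    exact ⟨⟨adjoint R x, hmem⟩, rfl, LinearPMap.adjoint_apply_eq hA.dense_domain _ hinner⟩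
  obtain ⟨y, hy1, hy2⟩ := (LinearPMap.mem_graph_iff _).1 hgraph
  dsimp only at hy1 hy2
  have hx : adjoint R x ∈ A.domain := hy1 ▸ y.2
  have hy : y = ⟨adjoint R x, hx⟩ := Subtype.ext hy1
  exact ⟨hx, by rw [← hy, hy2, add_sub_cancel_right]⟩

/-- The resolvent at `lam + w` in terms of the resolvent at `lam`. -/
theorem IsResolventAt.add {A : E →ₗ.[ℂ] E} {lam : ℂ} {R : E →L[ℂ] E} (hR : IsResolventAt A lam R)
    {w : ℂ} (hw : IsUnit (1 - w • R)) :
    IsResolventAt A (lam + w) (R * Ring.inverse (1 - w • R)) := by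
  have hright : ∀ x, Ring.inverse (1 - w • R) x - w • R (Ring.inverse (1 - w • R) x) = x :=
    fun x => congrArg (fun L : E →L[ℂ] E => L x) (Ring.mul_inverse_cancel _ hw)
  have hcomm : Commute R (Ring.inverse (1 - w • R)) := by
    obtain ⟨U, hU⟩ := hw
    have h : Commute R (1 - w • R) :=
      (Commute.one_right R).sub_right ((Commute.refl R).smul_right w)
    rw [← hU, Ring.inverse_unit]
    exact Commute.units_inv_right (hU.symm ▸ h)
  refine ⟨fun x => ?_, fun x => ?_⟩
  · obtain ⟨hx, h⟩ := hR.1 (Ring.inverse (1 - w • R) x)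
    refine ⟨hx, ?_⟩
    change A ⟨R (Ring.inverse (1 - w • R) x), hx⟩ -
      (lam + w) • R (Ring.inverse (1 - w • R) x) = x
    rw [add_smul, ← sub_sub, h, hright]
  · rw [hcomm.eq]
    have h1 : R (A x - (lam + w) • (x : E)) = (1 - w • R) (x : E) := by
      rw [add_smul, ← sub_sub, map_sub, hR.2 x, map_smul]
      rfl
    change Ring.inverse (1 - w • R) (R (A x - (lam + w) • (x : E))) = x
    rw [h1]
    exact congrArg (fun L : E →L[ℂ] E => L x) (Ring.inverse_mul_cancel _ hw)

variable {T A : E →ₗ.[ℂ] E} {γ γ' : ↥T.domain →ₗ[ℂ] F} {R : E →L[ℂ] E} {lam : ℂ}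

/-- A right inverse of `A - lam`, where `A` is the restriction of `T` to the kernel of `γ`. -/
theorem exists_right_inverse_of_graph
    (hA : ∀ x y : E, (x, y) ∈ A.graph ↔ ∃ hx : x ∈ T.domain, γ ⟨x, hx⟩ = 0 ∧ T ⟨x, hx⟩ = y)
    (hR : ∀ x : E, ∃ hx : R x ∈ A.domain, A ⟨R x, hx⟩ - lam • R x = x) :
    ∃ L : E →ₗ[ℂ] T.domain, ∀ x, (L x : E) = R x ∧ γ (L x) = 0 ∧ T (L x) = x + lam • R x := by
  have h : ∀ x, ∃ hx : R x ∈ T.domain, γ ⟨R x, hx⟩ = 0 ∧ T ⟨R x, hx⟩ = x + lam • R x := by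
    intro x
    obtain ⟨hx, h1⟩ := hR x
    rw [← hA, ← sub_eq_iff_eq_add.1 h1]
    exact A.mem_graph ⟨R x, hx⟩
  exact ⟨R.toLinearMap.codRestrict T.domain fun x => (h x).1, fun x => ⟨rfl, (h x).2⟩⟩

/-- Solvability of the boundary value problem `T f = lam f`, `γ f = φ`. -/
theorem exists_eigen_of_right_inverse {L : E →ₗ[ℂ] T.domain}
    (hL : ∀ x, (L x : E) = R x ∧ γ (L x) = 0 ∧ T (L x) = x + lam • R x) (f : T.domain) :
    ∃ g : T.domain, T g = lam • (g : E) ∧ γ g = γ f := by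
  obtain ⟨h1, h2, h3⟩ := hL (T f - lam • (f : E))
  refine ⟨f - L (T f - lam • (f : E)), ?_, by rw [map_sub, h2, sub_zero]⟩
  rw [T.map_sub, h3, AddSubgroupClass.coe_sub, h1, smul_sub]
  abel

/-- The map `x ↦ -γ' (A - lam)⁻¹ x` is bounded, and it is the adjoint of the solution operator of
the boundary value problem at the conjugate of `lam`. -/
theorem exists_clm_adjoint_solution [CompleteSpace E] [CompleteSpace F]
    {W : Submodule ℂ F} (hW : Dense (W : Set F))
    (hGreen : ∀ f g : T.domain,
      ⟪T f, (g : E)⟫_ℂ - ⟪(f : E), T g⟫_ℂ = ⟪γ f, γ' g⟫_ℂ - ⟪γ' f, γ g⟫_ℂ)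
    (hsol : ∀ φ ∈ W, ∃ f : T.domain, T f = conj lam • (f : E) ∧ γ f = φ)
    {L : E →ₗ[ℂ] T.domain}
    (hL : ∀ x, (L x : E) = R x ∧ γ (L x) = 0 ∧ T (L x) = x + lam • R x) :
    ∃ S : E →L[ℂ] F, (∀ x, S x = -γ' (L x)) ∧
      ∀ f : T.domain, T f = conj lam • (f : E) → ∀ x, ⟪γ f, S x⟫_ℂ = ⟪(f : E), x⟫_ℂ := by
  have hadj : ∀ f : T.domain, T f = conj lam • (f : E) → ∀ x,
      ⟪γ f, (-(γ' ∘ₗ L)) x⟫_ℂ = ⟪(f : E), x⟫_ℂ := by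
    intro f hf x
    obtain ⟨h1, h2, h3⟩ := hL x
    have hG := hGreen f (L x)
    rw [hf, h1, h2, h3, inner_smul_left, inner_add_right, inner_smul_right, inner_zero_right,
      Complex.conj_conj] at hG
    simp only [LinearMap.neg_apply, LinearMap.comp_apply, inner_neg_right]
    linear_combination hG
  have hcont : Continuous (-(γ' ∘ₗ L)) := by
    refine LinearMap.continuous_of_seq_closed_graph _ fun s x y hs hy => ?_
    refine hW.eq_of_inner_right ℂ fun φ hφ => ?_
    obtain ⟨f, hf, rfl⟩ := hsol φ hφ
    rw [hadj f hf]
    refine tendsto_nhds_unique (tendsto_const_nhds.inner hy) ?_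
    simp only [Function.comp_apply, hadj f hf]
    exact tendsto_const_nhds.inner hs
  exact ⟨⟨_, hcont⟩, fun x => rfl, hadj⟩

/-- The derivative of `z ↦ (z - lam) • S ((1 - (z - lam) R)⁻¹ x)` at `lam` is `S x`. -/
theorem HasDerivAt.eq_of_eventually_sub_eq [CompleteSpace E] {q : ℂ → F} {q' : F}
    (hq : HasDerivAt q q' lam) (S : E →L[ℂ] F) (x : E)
    (h : ∀ᶠ z in 𝓝 lam,
      q z - q lam = (z - lam) • S (Ring.inverse (1 - (z - lam) • R) x)) :
    q' = S x := by
  have hinv : Tendsto (fun z => Ring.inverse (1 - (z - lam) • R)) (𝓝 lam) (𝓝 1) := by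
    have h1 : Tendsto (fun z => 1 - (z - lam) • R) (𝓝 lam) (𝓝 1) := by
      have : Continuous fun z : ℂ => 1 - (z - lam) • R := by fun_prop
      simpa using this.tendsto lam
    have h2 := NormedRing.inverse_continuousAt (1 : (E →L[ℂ] E)ˣ)
    rw [ContinuousAt, Units.val_one, Ring.inverse_one] at h2
    exact h2.comp h1
  have hlim : Tendsto (fun z => S (Ring.inverse (1 - (z - lam) • R) x)) (𝓝[≠] lam) (𝓝 (S x)) :=
    (S.continuous.tendsto x).comp (((ContinuousLinearMap.apply ℂ E x).continuous.tendsto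
      (1 : E →L[ℂ] E)).comp (hinv.mono_left nhdsWithin_le_nhds))
  refine tendsto_nhds_unique hq.tendsto_slope (hlim.congr' ?_)
  filter_upwards [h.filter_mono nhdsWithin_le_nhds, self_mem_nhdsWithin] with z hz hne
  rw [slope_def_module, hz, smul_smul, inv_mul_cancel₀ (sub_ne_zero.2 hne), one_smul]

end Resolvent

/- Abstract elliptic setting for a bounded smooth domain `Ω ⊆ ℝ²`: `H = L²(Ω)`,
`B = L²(∂Ω)`, `T = 𝓛 ↾ H²(Ω)`, traces `γ0, γ1`, `H32 = H^{3/2}(∂Ω)`, `H12 = H^{1/2}(∂Ω)`,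
`AD`, `AN` the Dirichlet and Neumann realizations, `Qm` the Dirichlet-to-Neumann map,
`Qt` the Nevanlinna function equal to the closure of `Q(lam) - Re Q(lam₀)`,
`K` the closure of `Q(lam)⁻¹` and `D = (d/dlam) Q̃(lam)`.  Since `n = 2`, the difference of
the resolvents is a trace class operator (encoded as the summability hypotheses below), and
traces are computed as `tr X = ∑ ⟪X e_i, e_i⟫` along any Hilbert basis. -/

/-- (`n = 2`) For all `lam ∈ ρ(A_D) ∩ ρ(A_N)` the trace formula
`tr((A_D - lam)⁻¹ - (A_N - lam)⁻¹) = tr( closure(Q(lam)⁻¹) · (d/dlam) Q̃(lam) )` holds. -/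
theorem statement16
    (T : H →ₗ.[ℂ] H) (hTdense : Dense (T.domain : Set H))
    (γ0 γ1 : ↥T.domain →ₗ[ℂ] B)
    (H32 H12 : Submodule ℂ B) (hH32dense : Dense (H32 : Set B)) (hH12dense : Dense (H12 : Set B))
    (hγ0mem : ∀ f : T.domain, γ0 f ∈ H32) (hγ1mem : ∀ f : T.domain, γ1 f ∈ H12)
    (hGreen : ∀ f g : T.domain,
      ⟪T f, (g : H)⟫_ℂ - ⟪(f : H), T g⟫_ℂ = ⟪γ0 f, γ1 g⟫_ℂ - ⟪γ1 f, γ0 g⟫_ℂ)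
    (hsurj : ∀ φ ∈ H32, ∀ ψ ∈ H12, ∃ f : T.domain, γ0 f = φ ∧ γ1 f = ψ)
    (AD AN : H →ₗ.[ℂ] H)
    (hAD : ∀ x y : H,
      (x, y) ∈ AD.graph ↔ ∃ hx : x ∈ T.domain, γ0 ⟨x, hx⟩ = 0 ∧ T ⟨x, hx⟩ = y)
    (hAN : ∀ x y : H,
      (x, y) ∈ AN.graph ↔ ∃ hx : x ∈ T.domain, γ1 ⟨x, hx⟩ = 0 ∧ T ⟨x, hx⟩ = y)
    (hADsa : IsSelfAdjoint AD) (hANsa : IsSelfAdjoint AN)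
    (Qm : ℂ → (↥H32 →ₗ[ℂ] B))
    (hQm : ∀ lam : ℂ, InResolventSet AD lam → ∀ (φ : H32) (f : T.domain),
      T f = lam • (f : H) → γ0 f = (φ : B) → Qm lam φ = -(γ1 f))
    (lam₀ : ℂ) (hlam₀ : InResolventSet AD lam₀)
    (hlam₀c : InResolventSet AD ((starRingEnd ℂ) lam₀))
    (Qt : ℂ → (B →L[ℂ] B))
    (hQtQ : ∀ z : ℂ, InResolventSet AD z → ∀ φ : H32,
      Qt z (φ : B) = Qm z φ - (1 / 2 : ℂ) • (Qm lam₀ φ + Qm ((starRingEnd ℂ) lam₀) φ))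
    (lam : ℂ) (RD RN : H →L[ℂ] H)
    (hRD : IsResolventAt AD lam RD) (hRN : IsResolventAt AN lam RN)
    (K : B →L[ℂ] B) (hK : ∀ φ : H32, K (Qm lam φ) = (φ : B))
    (D : B →L[ℂ] B) (hD : HasDerivAt Qt D lam)
    (hTCH : ∀ {ι : Type} (e : HilbertBasis ι ℂ H),
      Summable fun i : ι => ⟪RD (e i) - RN (e i), e i⟫_ℂ)
    (hTCB : ∀ {κ : Type} (f : HilbertBasis κ ℂ B),
      Summable fun j : κ => ⟪K (D (f j)), f j⟫_ℂ) :
    ∀ (ι κ : Type) (e : HilbertBasis ι ℂ H) (f : HilbertBasis κ ℂ B),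
      ∑' i : ι, ⟪RD (e i) - RN (e i), e i⟫_ℂ = ∑' j : κ, ⟪K (D (f j)), f j⟫_ℂ := by

  intro ι κ e f
  have hRD' := hADsa.exists_adjoint_resolvent_mem hRD
  obtain ⟨LD, hLD⟩ := exists_right_inverse_of_graph hAD hRD.1
  obtain ⟨LD', hLD'⟩ := exists_right_inverse_of_graph hAD hRD'
  obtain ⟨LN, hLN⟩ := exists_right_inverse_of_graph hAN hRN.1
  have hsol : ∀ φ ∈ H32, ∃ g : T.domain, T g = lam • (g : H) ∧ γ0 g = φ := fun φ hφ => by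
    obtain ⟨g, rfl, -⟩ := hsurj φ hφ 0 H12.zero_mem
    exact exists_eigen_of_right_inverse hLD g
  have hsol' : ∀ φ ∈ H32, ∃ g : T.domain, T g = conj lam • (g : H) ∧ γ0 g = φ := fun φ hφ => by
    obtain ⟨g, rfl, -⟩ := hsurj φ hφ 0 H12.zero_mem
    exact exists_eigen_of_right_inverse hLD' g
  obtain ⟨S, hS, -⟩ := exists_clm_adjoint_solution hH32dense hGreen hsol' hLD
  obtain ⟨S', -, hSadj'⟩ := exists_clm_adjoint_solution hH32dense hGreen
    (by simpa only [Complex.conj_conj] using hsol) hLD'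
  set Γ : B →L[ℂ] H := ContinuousLinearMap.adjoint S'
  have hΓ : ∀ g : T.domain, T g = lam • (g : H) → Γ (γ0 g) = g := fun g hg =>
    ext_inner_right ℂ fun x => by
      rw [ContinuousLinearMap.adjoint_inner_left, hSadj' g (by rwa [Complex.conj_conj])]
  have hKrein : ∀ x, RD x - RN x = Γ (K (S x)) := by
    intro x
    obtain ⟨hD1, -, hD3⟩ := hLD x
    obtain ⟨hN1, hN2, hN3⟩ := hLN x
    have hcoe : ((LD x - LN x : T.domain) : H) = RD x - RN x := by
      rw [AddSubgroupClass.coe_sub, hD1, hN1]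
    have heig : T (LD x - LN x) = lam • ((LD x - LN x : T.domain) : H) := by
      rw [T.map_sub, hD3, hN3, hcoe, add_sub_add_left_eq_sub, smul_sub]
    have hQ := hQm lam ⟨RD, hRD⟩ ⟨_, hγ0mem (LD x - LN x)⟩ _ heig rfl
    rw [map_sub γ1, hN2, sub_zero, ← hS] at hQ
    rw [← hQ, hK, hΓ _ heig, hcoe]
  have hDS : D = S ∘L Γ := by
    refine ContinuousLinearMap.ext fun x =>
      congrFun (Continuous.ext_on hH32dense D.continuous (S ∘L Γ).continuous fun φ hφ => ?_) x
    obtain ⟨g, hg, rfl⟩ := hsol φ hφ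
    have hderiv : HasDerivAt (fun z => Qt z (γ0 g)) (D (γ0 g)) lam := by
      simpa using hD.clm_apply (hasDerivAt_const lam (γ0 g))
    rw [ContinuousLinearMap.comp_apply, hΓ g hg]
    refine hderiv.eq_of_eventually_sub_eq (R := RD) S (g : H) ?_
    have hunit : ∀ᶠ z in nhds lam, IsUnit (1 - (z - lam) • RD) := by
      have hcont : Continuous fun z : ℂ => 1 - (z - lam) • RD := by fun_prop
      exact hcont.continuousAt.eventually (Units.isOpen.mem_nhds (by simp))
    filter_upwards [hunit] with z hz
    have hres : InResolventSet AD z := ⟨_, by simpa using hRD.add hz⟩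
    set y := Ring.inverse (1 - (z - lam) • RD) (g : H)
    have hy : y - (z - lam) • RD y = g :=
      congrArg (fun L : H →L[ℂ] H => L g) (Ring.mul_inverse_cancel _ hz)
    obtain ⟨h1, h2, h3⟩ := hLD y
    have hcoe : ((g + (z - lam) • LD y : T.domain) : H) = y := by
      rw [Submodule.coe_add, Submodule.coe_smul, h1, ← hy, sub_add_cancel]
    have heig : T (g + (z - lam) • LD y) = z • ((g + (z - lam) • LD y : T.domain) : H) := by
      rw [hcoe, T.map_add, T.map_smul, hg, h3, ← hy]
      module
    have hQ1 := hQm z hres ⟨γ0 g, hφ⟩ _ heig (by rw [map_add, map_smul, h2, smul_zero, add_zero])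
    have hQ2 := hQm lam ⟨RD, hRD⟩ ⟨γ0 g, hφ⟩ g hg rfl
    have hQt1 := hQtQ z hres ⟨γ0 g, hφ⟩
    have hQt2 := hQtQ lam ⟨RD, hRD⟩ ⟨γ0 g, hφ⟩
    dsimp only at hQt1 hQt2 ⊢
    rw [hQt1, hQt2, hQ1, hQ2, hS, map_add, map_smul]
    module
  have hnucH : IsNuclear (Γ ∘L (K ∘L S)) :=
    isNuclear_of_summable_diagonal e _ fun _ b => by
      simpa only [hKrein] using! hTCH b
  have hnucB : IsNuclear ((K ∘L S) ∘L Γ) :=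
    isNuclear_of_summable_diagonal f _ fun _ b => by
      simpa only [hDS] using! hTCB b
  have htrace := congrArg conj (tsum_inner_comp_comm Γ (K ∘L S) hnucH hnucB e f)
  rw [Complex.conj_tsum, Complex.conj_tsum] at htrace
  simpa [hKrein, hDS] using htrace
end
end
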